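/- Let G be a group, S and T G-sets, and ρ : ℤ[S] → ℤ[T] a G-equivariant additive homomorphism. Suppose that S has finitely many G-orbits and that the stabilizer in G of each element of T is finite. Then for every t ∈ T the set S(t) = {s ∈ S : ⟨ρ(s), t⟩ ≠ 0} is finite. -/

import Mathlib

open Finsupp

/-- Action of `g : G` on the permutation module `ℤ[S]`, permuting the basis. -/
def gact {G S : Type*} [Group G] [MulAction G S] (g : G) (x : S →₀ ℤ) : S →₀ ℤ :=
  Finsupp.equivMapDomain (MulAction.toPerm g) x

/-- The ℓ1-norm on `ℤ[S]`. -/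
def l1 {S : Type*} (x : S →₀ ℤ) : ℕ := x.support.sum fun s => (x s).natAbs

/-- `x` is a part of `y`, written `x ⪯_S y`. -/
def IsPart {S : Type*} (x y : S →₀ ℤ) : Prop := ∀ s, x s ^ 2 ≤ x s * y s

/-- `x` and `y` have trivial S-intersection. -/
def SIntTrivial {S : Type*} (x y : S →₀ ℤ) : Prop := ∀ s, 0 ≤ x s * y s

/-- membership in `D₁ = S ∪ (-S) ⊆ ℤ[S]`. -/
def InD1 {S : Type*} (x : S →₀ ℤ) : Prop :=
  ∃ s, x = Finsupp.single s 1 ∨ x = Finsupp.single s (-1)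

/-- `x` and `y` have nontrivial ρ-intersection. -/
def RhoInt {S T : Type*} (ρ : (S →₀ ℤ) →+ (T →₀ ℤ)) (x y : S →₀ ℤ) : Prop :=
  ∃ x₁ y₁, InD1 x₁ ∧ InD1 y₁ ∧ IsPart x₁ x ∧ IsPart y₁ y ∧ ∃ t, ρ x₁ t * ρ y₁ t < 0

/-- membership in `D_n`. -/
def InD {S T : Type*} (ρ : (S →₀ ℤ) →+ (T →₀ ℤ)) (n : ℕ) (x : S →₀ ℤ) : Prop :=
  ∃ c : ℕ → (S →₀ ℤ), (∀ i < n, InD1 (c i)) ∧ x = ∑ i ∈ Finset.range n, c i ∧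
    ∀ k, 1 ≤ k → k < n →
      SIntTrivial (∑ i ∈ Finset.range k, c i) (c k) ∧
      RhoInt ρ (∑ i ∈ Finset.range k, c i) (c k)

/-- `x` is ρ-connected. -/
def RhoConnected {S T : Type*} (ρ : (S →₀ ℤ) →+ (T →₀ ℤ)) (x : S →₀ ℤ) : Prop :=
  ∃ n, 1 ≤ n ∧ InD ρ n x

/-- `ρ` is G-equivariant. -/
def Equivariant (G : Type*) {S T : Type*} [Group G] [MulAction G S] [MulAction G T]
    (ρ : (S →₀ ℤ) →+ (T →₀ ℤ)) : Prop :=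
  ∀ (g : G) (x : S →₀ ℤ), ρ (gact g x) = gact g (ρ x)

/-- `S` has finitely many G-orbits. -/
def FinitelyManyOrbits (G S : Type*) [Group G] [MulAction G S] : Prop :=
  ∃ R : Finset S, ∀ s : S, ∃ (g : G) (r : S), r ∈ R ∧ g • r = s

/-- every element of `T` has finite stabilizer. -/
def FiniteStabilizers (G T : Type*) [Group G] [MulAction G T] : Prop :=
  ∀ t : T, {g : G | g • t = t}.Finite

/-! Up to translation by `G`, each `s` is one of finitely many representatives `s₀`. If
`s = g • s₀` and `⟨ρ(s), t⟩ ≠ 0`, then `u = g⁻¹ • t` lies in the finite support of `ρ(s₀)`, and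
the `g` with `g • u = t` form a right coset of the finite stabilizer of `t`. So only finitely many
triples `(s₀, u, g)` occur. -/

section PermutationModule

variable {G S : Type*} [Group G] [MulAction G S]

theorem gact_single (g : G) (s : S) (n : ℤ) : gact g (single s n) = single (g • s) n :=
  equivMapDomain_single _ s n

theorem gact_apply_smul (g : G) (x : S →₀ ℤ) (s : S) : gact g x (g • s) = x s := by
  simp [gact, equivMapDomain_apply]

theorem Equivariant.apply_single_smul {T : Type*} [MulAction G T]
    {ρ : (S →₀ ℤ) →+ (T →₀ ℤ)} (hρ : Equivariant G ρ) (g : G) (s : S) (n : ℤ) (t : T) :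
    ρ (single (g • s) n) (g • t) = ρ (single s n) t := by
  rw [← gact_single, hρ, gact_apply_smul]

end PermutationModule

section InvariantRelation

variable {G S T : Type*} [Group G] [MulAction G S] [MulAction G T]

theorem finite_setOf_smul_eq_of_finite_stabilizer {t : T}
    (ht : (MulAction.stabilizer G t : Set G).Finite) (u : T) : {g : G | g • u = t}.Finite := by
  obtain hempty | ⟨g₀, rfl : g₀ • u = t⟩ := {g : G | g • u = t}.eq_empty_or_nonempty
  · exact hempty ▸ Set.finite_empty
  · refine (ht.image (· * g₀)).subset fun g (hg : g • u = g₀ • u) ↦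
      ⟨g * g₀⁻¹, ?_, inv_mul_cancel_right g g₀⟩
    simpa [mul_smul] using hg

theorem finite_setOf_mem_orbit_and_rel {r : S → T → Prop}
    (hr : ∀ (g : G) s t, r s t → r (g • s) (g • t)) {s₀ : S} (hs₀ : {u | r s₀ u}.Finite)
    {t : T} (ht : (MulAction.stabilizer G t : Set G).Finite) :
    {s | s ∈ MulAction.orbit G s₀ ∧ r s t}.Finite := by
  have htranslates : (⋃ u ∈ {u | r s₀ u}, (· • s₀) '' {g : G | g • u = t}).Finite :=
    hs₀.biUnion fun u _ ↦ (finite_setOf_smul_eq_of_finite_stabilizer ht u).image _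
  refine htranslates.subset ?_
  rintro _ ⟨⟨g, rfl⟩, hgt⟩
  have hu : r s₀ (g⁻¹ • t) := by simpa using hr g⁻¹ _ _ hgt
  exact Set.mem_biUnion hu ⟨g, smul_inv_smul g t, rfl⟩

theorem stmt_7_general {r : S → T → Prop} (hr : ∀ (g : G) s t, r s t → r (g • s) (g • t))
    (hfin : ∀ s, {t | r s t}.Finite) (hS : FinitelyManyOrbits G S)
    {t : T} (ht : (MulAction.stabilizer G t : Set G).Finite) : {s | r s t}.Finite := by
  obtain ⟨R, hR⟩ := hS
  refine (R.finite_toSet.biUnion fun s₀ _ ↦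
    finite_setOf_mem_orbit_and_rel hr (hfin s₀) ht).subset fun s hs ↦ ?_
  obtain ⟨g, s₀, hs₀, hgs⟩ := hR s
  exact Set.mem_biUnion hs₀ ⟨⟨g, hgs⟩, hs⟩

end InvariantRelation

/-- Lemma: the set `S(t) = {s ∈ S : ⟨ρ(s), t⟩ ≠ 0}` is finite. -/
theorem stmt_7 {G S T : Type*} [Group G] [MulAction G S] [MulAction G T]
    (ρ : (S →₀ ℤ) →+ (T →₀ ℤ)) (hρ : Equivariant G ρ)
    (hS : FinitelyManyOrbits G S) (hstab : FiniteStabilizers G T) :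
    ∀ t : T, {s : S | ρ (Finsupp.single s 1) t ≠ 0}.Finite := fun t ↦
  stmt_7_general (r := fun s t ↦ ρ (single s 1) t ≠ 0)
    (fun g s t ↦ (hρ.apply_single_smul g s 1 t).trans_ne)
    (fun s ↦ (ρ (single s 1)).hasFiniteSupport) hS (hstab t)
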